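/- arXiv:1105.2420 — 3 statements merged into one kernel-verified Lean document; each statement's English description precedes it below -/
import Mathlib

section
/- For every f ∈ ℬ(ℝ^d × ℝ^d) there exists a natural number k such that O^k f is Lebesgue integrable on ℝ^d × ℝ^d. -/
/-!
Each application of `O` gains one power of the inverse weight. The weight `1 + |x|² + |w|²` is a
symbol with itself as order function, hence so is its inverse; since symbols are stable under
products and differentiation, `O` maps symbols of order function `m` to symbols of order function
`m / (1 + |x|² + |w|²)`, at the cost of two derivatives. Starting from `m = 1`, the iterate
`O^(d+1) f` is dominated by `(1 + |x|² + |w|²)^(-(d+1))`, which is integrable in dimension `2d`.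
-/

open MeasureTheory Complex

variable {d : ℕ}

/-- Second derivative of `f` in direction `v`. -/
noncomputable def dir2 (v : (Fin d → ℝ) × (Fin d → ℝ)) (f : (Fin d → ℝ) × (Fin d → ℝ) → ℂ)
    (z : (Fin d → ℝ) × (Fin d → ℝ)) : ℂ :=
  fderiv ℝ (fun y => fderiv ℝ f y v) z v

/-- The Laplacian in all `2d` variables. -/
noncomputable def lap (f : (Fin d → ℝ) × (Fin d → ℝ) → ℂ)
    (z : (Fin d → ℝ) × (Fin d → ℝ)) : ℂ :=
  ∑ i : Fin d, dir2 (Pi.single i 1, 0) f z + ∑ i : Fin d, dir2 (0, Pi.single i 1) f z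

/-- The weight `1 + |x|² + |w|²`. -/
noncomputable def wt (z : (Fin d → ℝ) × (Fin d → ℝ)) : ℝ :=
  1 + ∑ i, z.1 i ^ 2 + ∑ i, z.2 i ^ 2

/-- The operator `(O f)(x,w) = (1 − Δ)(f(x,w)/(1 + |x|² + |w|²))`. -/
noncomputable def Oop (f : (Fin d → ℝ) × (Fin d → ℝ) → ℂ) :
    (Fin d → ℝ) × (Fin d → ℝ) → ℂ :=
  fun z => f z / (wt z : ℂ) - lap (fun y => f y / (wt y : ℂ)) z

/-- Membership in `ℬ`: smooth with all derivatives (including order zero) bounded. -/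
def IsBSpace (g : (Fin d → ℝ) × (Fin d → ℝ) → ℂ) : Prop :=
  ContDiff ℝ (⊤ : ℕ∞) g ∧ ∀ N : ℕ, ∃ C : ℝ, ∀ z, ‖iteratedFDeriv ℝ N g z‖ ≤ C

open Asymptotics

/-- The class `C^n` part of the symbol class `S(m)` attached to an order function `m`: all
derivatives up to order `n` are `O(m)`, uniformly on the whole space (whence the filter `⊤`), with
no gain under differentiation. For `m = 1` this is the space of `C^n` functions with bounded
derivatives. -/
structure IsSymbol {E F : Type*} [NormedAddCommGroup E] [NormedSpace ℝ E]
    [NormedAddCommGroup F] [NormedSpace ℝ F] (n : ℕ) (m : E → ℝ) (f : E → F) : Prop where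
  contDiff : ContDiff ℝ n f
  isBigO : ∀ N ≤ n, iteratedFDeriv ℝ N f =O[⊤] m

namespace IsSymbol

variable {E F G : Type*} [NormedAddCommGroup E] [NormedSpace ℝ E] [NormedAddCommGroup F]
  [NormedSpace ℝ F] [NormedAddCommGroup G] [NormedSpace ℝ G] {n k : ℕ} {m m₁ m₂ : E → ℝ}
  {f g : E → F}

lemma of_le (hf : IsSymbol n m f) (hkn : k ≤ n) : IsSymbol k m f :=
  ⟨hf.contDiff.of_le (mod_cast hkn), fun N hN ↦ hf.isBigO N (hN.trans hkn)⟩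

lemma trans_isBigO (hf : IsSymbol n m₁ f) (hm : m₁ =O[⊤] m₂) : IsSymbol n m₂ f :=
  ⟨hf.contDiff, fun N hN ↦ (hf.isBigO N hN).trans hm⟩

lemma isBigO_self (hf : IsSymbol n m f) : f =O[⊤] m :=
  (isBigO_of_le ⊤ fun z ↦ (norm_iteratedFDeriv_zero (𝕜 := ℝ) (f := f) (x := z)).ge).trans
    (hf.isBigO 0 n.zero_le)

protected lemma fderiv (hf : IsSymbol (n + 1) m f) : IsSymbol n m (fderiv ℝ f) where
  contDiff := hf.contDiff.fderiv_right le_rfl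
  isBigO N hN := (isBigO_of_le ⊤ fun _ ↦ norm_iteratedFDeriv_fderiv.le).trans
    (hf.isBigO (N + 1) (by lia))

lemma of_fderiv (hf : Differentiable ℝ f) (hfm : f =O[⊤] m) (hf' : IsSymbol n m (fderiv ℝ f)) :
    IsSymbol (n + 1) m f where
  contDiff := contDiff_succ_iff_fderiv.2 ⟨hf, by simp, hf'.contDiff⟩
  isBigO
    | 0, _ => (isBigO_of_le ⊤ fun _ ↦ norm_iteratedFDeriv_zero.le).trans hfm
    | N + 1, hN => (isBigO_of_le ⊤ fun _ ↦ norm_iteratedFDeriv_fderiv.ge).trans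
        (hf'.isBigO N (by lia))

lemma of_continuous (hf : Continuous f) (hfm : f =O[⊤] m) : IsSymbol 0 m f where
  contDiff := contDiff_zero.2 hf
  isBigO
    | 0, _ => (isBigO_of_le ⊤ fun _ ↦ norm_iteratedFDeriv_zero.le).trans hfm

protected lemma const (c : F) : IsSymbol n (1 : E → ℝ) (fun _ ↦ c) where
  contDiff := contDiff_const
  isBigO
    | 0, _ => isBigO_of_le' (c := ‖c‖) ⊤ fun z ↦ by simp
    | N + 1, _ => by
        rw [iteratedFDeriv_const_of_ne N.succ_ne_zero]
        exact isBigO_zero _ _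

lemma add (hf : IsSymbol n m f) (hg : IsSymbol n m g) : IsSymbol n m (f + g) where
  contDiff := hf.contDiff.add hg.contDiff
  isBigO N hN := by
    have hNn : (N : WithTop ℕ∞) ≤ n := mod_cast hN
    rw [iteratedFDeriv_add (hf.contDiff.of_le hNn) (hg.contDiff.of_le hNn)]
    exact (hf.isBigO N hN).add (hg.isBigO N hN)

lemma neg (hf : IsSymbol n m f) : IsSymbol n m (-f) where
  contDiff := hf.contDiff.neg
  isBigO N hN := by
    rw [iteratedFDeriv_neg]
    exact (hf.isBigO N hN).neg_left

lemma sub (hf : IsSymbol n m f) (hg : IsSymbol n m g) : IsSymbol n m (f - g) :=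
  sub_eq_add_neg f g ▸ hf.add hg.neg

lemma sum {ι : Type*} {s : Finset ι} {f : ι → E → F} (hf : ∀ i ∈ s, IsSymbol n m (f i)) :
    IsSymbol n m (fun z ↦ ∑ i ∈ s, f i z) where
  contDiff := ContDiff.sum fun i hi ↦ (hf i hi).contDiff
  isBigO N hN := by
    rw [iteratedFDeriv_sum fun i hi ↦ (hf i hi).contDiff.of_le (mod_cast hN)]
    exact IsBigO.sum fun i hi ↦ (hf i hi).isBigO N hN

lemma smul {a : E → ℝ} (ha : IsSymbol n m₁ a) (hf : IsSymbol n m₂ f) :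
    IsSymbol n (m₁ * m₂) (a • f) where
  contDiff := ha.contDiff.smul hf.contDiff
  isBigO N hN := by
    have leibniz (z : E) : ‖iteratedFDeriv ℝ N (a • f) z‖ ≤
        ‖∑ i ∈ Finset.range (N + 1),
          (N.choose i : ℝ) * ‖iteratedFDeriv ℝ i a z‖ * ‖iteratedFDeriv ℝ (N - i) f z‖‖ :=
      (norm_iteratedFDeriv_smul_le ha.contDiff hf.contDiff z (mod_cast hN)).trans
        (Real.le_norm_self _)
    refine (isBigO_of_le ⊤ leibniz).trans (IsBigO.fun_sum fun i hi ↦ ?_)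
    have hiN : i ≤ N := Finset.mem_range_succ_iff.1 hi
    exact ((ha.isBigO i (hiN.trans hN)).norm_left.const_mul_left _).mul
      (hf.isBigO (N - i) ((N.sub_le i).trans hN)).norm_left

lemma clm_comp (L : F →L[ℝ] G) (hf : IsSymbol n m f) : IsSymbol n m (L ∘ f) where
  contDiff := L.contDiff.comp hf.contDiff
  isBigO N hN := (isBigO_of_le' ⊤ fun _ ↦
    L.norm_iteratedFDeriv_comp_left hf.contDiff.contDiffAt (mod_cast hN)).trans (hf.isBigO N hN)

lemma fderiv_apply (hf : IsSymbol (n + 1) m f) (v : E) :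
    IsSymbol n m (fun z ↦ _root_.fderiv ℝ f z v) :=
  hf.fderiv.clm_comp (ContinuousLinearMap.apply ℝ F v)

lemma clm (L : E →L[ℝ] F) : IsSymbol n (fun z ↦ 1 + ‖z‖) L := by
  have hL : (L : E → F) =O[⊤] fun z ↦ 1 + ‖z‖ := isBigO_of_le' ⊤ fun z ↦ by
    rw [Real.norm_of_nonneg (by positivity)]
    exact (L.le_opNorm z).trans (by gcongr; linarith)
  have one_le : (1 : E → ℝ) =O[⊤] fun z ↦ 1 + ‖z‖ := isBigO_of_le ⊤ fun z ↦ by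
    rw [Real.norm_of_nonneg (by positivity : (0 : ℝ) ≤ 1 + ‖z‖)]
    simp
  have hfderiv : fderiv ℝ L = fun _ ↦ L := funext fun _ ↦ L.fderiv
  have hL' : IsSymbol n (fun z ↦ 1 + ‖z‖) (fderiv ℝ L) :=
    hfderiv ▸ (IsSymbol.const L).trans_isBigO one_le
  exact (of_fderiv L.differentiable hL hL').of_le n.le_succ

/-- Induction on the order works because `(a⁻¹)' = -a⁻¹ a⁻¹ a'` involves only `a⁻¹` itself and `a'`,
and the order functions of the three factors multiply to `a⁻¹`. -/
lemma inv {a : E → ℝ} (ha : IsSymbol n a a) (ha₀ : ∀ z, a z ≠ 0) : IsSymbol n a⁻¹ a⁻¹ := by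
  induction n with
  | zero => exact of_continuous (ha.contDiff.continuous.inv₀ ha₀) (isBigO_refl _ _)
  | succ n ih =>
    have hdiff : Differentiable ℝ a := ha.contDiff.differentiable (by simp)
    have hderiv : fderiv ℝ a⁻¹ = -(a⁻¹ • a⁻¹ • fderiv ℝ a) := by
      funext z
      refine ((hasDerivAt_inv (ha₀ z)).comp_hasFDerivAt z (hdiff z).hasFDerivAt).fderiv.trans ?_
      simp [smul_smul, sq]
    have hweight : a⁻¹ * (a⁻¹ * a) = a⁻¹ := by
      funext z
      simp [ha₀ z]
    have hinv := ih (ha.of_le n.le_succ)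
    refine of_fderiv (hdiff.inv ha₀) (isBigO_refl _ _) ?_
    rw [hderiv]
    simpa only [hweight] using (hinv.smul (hinv.smul ha.fderiv)).neg

lemma integrable [MeasurableSpace E] [OpensMeasurableSpace E] [SecondCountableTopologyEither E F]
    {μ : Measure E} (hf : IsSymbol n m f) (hm : Integrable m μ) : Integrable f μ :=
  hf.isBigO_self.integrable hf.contDiff.continuous.aestronglyMeasurable hm

end IsSymbol

lemma IsBSpace.isSymbol {f : (Fin d → ℝ) × (Fin d → ℝ) → ℂ} (hf : IsBSpace f) (n : ℕ) :
    IsSymbol n 1 f where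
  contDiff := hf.1.of_le (mod_cast le_top)
  isBigO N _ := isBigO_top.2 (by simpa using hf.2 N)

lemma norm_sq_le_sum_sq {ι : Type*} [Fintype ι] (x : ι → ℝ) : ‖x‖ ^ 2 ≤ ∑ i, x i ^ 2 := by
  have norm_le_sqrt : ‖x‖ ≤ √(∑ i, x i ^ 2) :=
    (pi_norm_le_iff_of_nonneg (Real.sqrt_nonneg _)).2 fun i ↦
      Real.abs_le_sqrt (Finset.single_le_sum (fun j _ ↦ sq_nonneg (x j)) (Finset.mem_univ i))
  have sum_nonneg : 0 ≤ ∑ i, x i ^ 2 := Finset.sum_nonneg fun i _ ↦ sq_nonneg (x i)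
  exact (Real.le_sqrt (norm_nonneg x) sum_nonneg).1 norm_le_sqrt

lemma one_add_norm_sq_le_wt (z : (Fin d → ℝ) × (Fin d → ℝ)) : 1 + ‖z‖ ^ 2 ≤ wt z := by
  have hfst := norm_sq_le_sum_sq z.1
  have hsnd := norm_sq_le_sum_sq z.2
  have hmax : ‖z‖ ^ 2 ≤ ‖z.1‖ ^ 2 + ‖z.2‖ ^ 2 := by
    rcases max_choice ‖z.1‖ ‖z.2‖ with h | h <;> rw [Prod.norm_def, h]
    · exact le_add_of_nonneg_right (by positivity)
    · exact le_add_of_nonneg_left (by positivity)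
  unfold wt
  linarith

lemma wt_pos (z : (Fin d → ℝ) × (Fin d → ℝ)) : 0 < wt z :=
  lt_of_lt_of_le (by positivity) (one_add_norm_sq_le_wt z)

lemma one_add_norm_mul_self_isBigO_wt :
    (fun z : (Fin d → ℝ) × (Fin d → ℝ) ↦ (1 + ‖z‖) * (1 + ‖z‖)) =O[⊤] wt :=
  isBigO_of_le' (c := 2) ⊤ fun z ↦ by
    rw [Real.norm_of_nonneg (by positivity), Real.norm_of_nonneg (wt_pos z).le]
    nlinarith [one_add_norm_sq_le_wt z, sq_nonneg (1 - ‖z‖)]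

lemma one_isBigO_wt : (1 : (Fin d → ℝ) × (Fin d → ℝ) → ℝ) =O[⊤] wt :=
  isBigO_of_le ⊤ fun z ↦ by
    rw [Real.norm_of_nonneg (wt_pos z).le]
    simpa using (le_add_of_nonneg_right (by positivity)).trans (one_add_norm_sq_le_wt z)

lemma isSymbol_wt (n : ℕ) : IsSymbol n (wt (d := d)) wt := by
  have sq_clm (L : (Fin d → ℝ) × (Fin d → ℝ) →L[ℝ] ℝ) : IsSymbol n wt (fun z ↦ L z ^ 2) := by
    have hsq : (⇑L • ⇑L) = fun z ↦ L z ^ 2 := funext fun z ↦ (sq (L z)).symm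
    exact hsq ▸
      ((IsSymbol.clm L).smul (IsSymbol.clm L)).trans_isBigO one_add_norm_mul_self_isBigO_wt
  exact (((IsSymbol.const 1).trans_isBigO one_isBigO_wt).add
    (.sum fun i _ ↦ sq_clm ((ContinuousLinearMap.proj i).comp (.fst ℝ _ _)))).add
    (.sum fun i _ ↦ sq_clm ((ContinuousLinearMap.proj i).comp (.snd ℝ _ _)))

lemma isSymbol_wt_inv (n : ℕ) : IsSymbol n (wt (d := d))⁻¹ wt⁻¹ :=
  (isSymbol_wt n).inv fun z ↦ (wt_pos z).ne'

lemma integrable_wt_inv_pow {k : ℕ} (hk : d < k) : Integrable ((wt (d := d))⁻¹ ^ k) := by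
  have hdim : (Module.finrank ℝ ((Fin d → ℝ) × (Fin d → ℝ)) : ℝ) < 2 * k := by
    rw [Module.finrank_prod, Module.finrank_fin_fun]
    exact_mod_cast (by lia : d + d < 2 * k)
  have : (volume : Measure ((Fin d → ℝ) × (Fin d → ℝ))).IsAddHaarMeasure :=
    Measure.prod.instIsAddHaarMeasure _ _
  refine (integrable_rpow_neg_one_add_norm_sq hdim).mono'
    ((isSymbol_wt_inv 0).contDiff.continuous.pow k).aestronglyMeasurable
    (.of_forall fun z ↦ ?_)
  calc ‖((wt z)⁻¹) ^ k‖ = ((wt z)⁻¹) ^ k :=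
        Real.norm_of_nonneg (pow_nonneg (inv_nonneg.2 (wt_pos z).le) k)
    _ ≤ ((1 + ‖z‖ ^ 2)⁻¹) ^ k := by
        have := wt_pos z
        gcongr
        exact one_add_norm_sq_le_wt z
    _ = (1 + ‖z‖ ^ 2) ^ (-(2 * k) / 2 : ℝ) := by
        rw [neg_div, mul_div_cancel_left₀ _ two_ne_zero, Real.rpow_neg (by positivity),
          Real.rpow_natCast, inv_pow]

namespace IsSymbol

variable {n : ℕ} {m : (Fin d → ℝ) × (Fin d → ℝ) → ℝ} {f : (Fin d → ℝ) × (Fin d → ℝ) → ℂ}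

protected lemma lap (hf : IsSymbol (n + 2) m f) : IsSymbol n m (lap f) :=
  have hdir2 (v : (Fin d → ℝ) × (Fin d → ℝ)) : IsSymbol n m (dir2 v f) :=
    (hf.fderiv_apply v).fderiv_apply v
  .add (.sum fun _ _ ↦ hdir2 _) (.sum fun _ _ ↦ hdir2 _)

protected lemma Oop (hf : IsSymbol (n + 2) m f) : IsSymbol n (wt⁻¹ * m) (Oop f) := by
  have div_wt : (fun z ↦ f z / (wt z : ℂ)) = (wt (d := d))⁻¹ • f := by
    funext z
    simp [div_eq_inv_mul]
  have hquot : IsSymbol (n + 2) (wt⁻¹ * m) (fun z ↦ f z / (wt z : ℂ)) :=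
    div_wt ▸ (isSymbol_wt_inv _).smul hf
  exact (hquot.of_le (n.le_add_right 2)).sub hquot.lap

lemma Oop_iterate {k : ℕ} (hf : IsSymbol (n + 2 * k) m f) :
    IsSymbol n (wt⁻¹ ^ k * m) (Oop^[k] f) := by
  induction k generalizing n with
  | zero => simpa using hf
  | succ k ih =>
    rw [Function.iterate_succ_apply', pow_succ', mul_assoc]
    exact (ih (by convert hf using 1; ring)).Oop

end IsSymbol

theorem exists_iterate_integrable_general {f : (Fin d → ℝ) × (Fin d → ℝ) → ℂ} {k : ℕ} (hk : d < k)
    (hf : IsSymbol (2 * k) 1 f) : Integrable (Oop^[k] f) := by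
  have hsymbol : IsSymbol 0 (wt⁻¹ ^ k * 1) (Oop^[k] f) := IsSymbol.Oop_iterate (by rwa [zero_add])
  rw [mul_one] at hsymbol
  exact hsymbol.integrable (integrable_wt_inv_pow hk)

theorem exists_iterate_integrable (d : ℕ) (f : (Fin d → ℝ) × (Fin d → ℝ) → ℂ)
    (hf : IsBSpace f) :
    ∃ k : ℕ, Integrable (Oop^[k] f)
      (volume : Measure ((Fin d → ℝ) × (Fin d → ℝ))) :=
  ⟨d + 1, exists_iterate_integrable_general d.lt_succ_self (hf.isSymbol _)⟩
end

section
/- Fix θ > 0. For all Schwartz functions f, g : ℝ^d × ℝ^d → ℂ, the function f ⋆_θ g is again a Schwartz function, and the star product is associative on Schwartz functions: (f ⋆_θ g) ⋆_θ h = f ⋆_θ (g ⋆_θ h) for all Schwartz f, g, h. -/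
open MeasureTheory Complex Real

/-- The star product `(f ⋆_θ g)(x,w)` on `ℝ^d × ℝ^d`. -/
noncomputable def sprod (d : ℕ) (θ : ℝ) (f g : (Fin d → ℝ) × (Fin d → ℝ) → ℂ) :
    (Fin d → ℝ) × (Fin d → ℝ) → ℂ := fun z =>
  (((Real.pi * θ) ^ (-(2 * d : ℤ)) : ℝ) : ℂ) *
    ∫ p : ((Fin d → ℝ) × (Fin d → ℝ)) × ((Fin d → ℝ) × (Fin d → ℝ)),
      f p.1 * g p.2 * Complex.exp (2 * Complex.I / (θ : ℂ) *
        ((∑ i, (p.2.1 i - z.1 i) * p.1.2 i + ∑ i, (z.1 i - p.1.1 i) * p.2.2 i +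
          ∑ i, (p.1.1 i - p.2.1 i) * z.2 i : ℝ) : ℂ))

/-
The weight `(πθ)^(-2d)` is absorbed by scaling the measure on each factor by `|πθ|^(-d)`, and `2/θ`
by scaling the symplectic form by `(πθ)⁻¹`, as `𝐞 x = exp (2πix)`: the star product is the product
`(f ⋆ g) z = ∫∫ 𝐞 (-(σ p q + σ q z + σ z p)) • (f p * g q)` of a symplectic space `(E, σ)`.

Up to a chirp, `f ⊗ g` is integrated against a character depending linearly on `z` through the
nondegenerate form `σ`, so `f ⋆ g` is a Fourier transform of a Schwartz function. Translating one
of the two variables by `z` shows that `⋆` is a twisted convolution with the symplectic Fourier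
transform of either factor:
`(f ⋆ g) z = ∫ 𝐞 (-σ u z) • (f̂ u * g (z + u)) = ∫ 𝐞 (-σ v z) • (f (z - v) * ĝ v)`.
Used in the first form for the product by `f` and in the second for the product by `h`, this writes
the two bracketings of `f ⋆ g ⋆ h` as the two iterated integrals of
`𝐞 (-(σ u z + σ v z + σ v u)) • (f̂ u * g (z + u - v) * ĥ v)`, and Fubini's theorem applies.
-/

open scoped SchwartzMap FourierTransform InnerProductSpace Matrix

theorem norm_iteratedFDeriv_comp_clm_le {𝕜 V W G : Type*} [NontriviallyNormedField 𝕜]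
    [NormedAddCommGroup V] [NormedSpace 𝕜 V] [NormedAddCommGroup W] [NormedSpace 𝕜 W]
    [NormedAddCommGroup G] [NormedSpace 𝕜 G] {f : W → G} {n : ℕ} (hf : ContDiff 𝕜 n f)
    {L : V →L[𝕜] W} (hL : ‖L‖ ≤ 1) (x : V) :
    ‖iteratedFDeriv 𝕜 n (f ∘ L) x‖ ≤ ‖iteratedFDeriv 𝕜 n f (L x)‖ := by
  rw [L.iteratedFDeriv_comp_right hf x le_rfl]
  calc ‖(iteratedFDeriv 𝕜 n f (L x)).compContinuousLinearMap fun _ => L‖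
      ≤ ‖iteratedFDeriv 𝕜 n f (L x)‖ * ∏ _i : Fin n, ‖L‖ :=
        ContinuousMultilinearMap.norm_compContinuousLinearMap_le _ _
    _ ≤ ‖iteratedFDeriv 𝕜 n f (L x)‖ :=
        mul_le_of_le_one_right (norm_nonneg _) <|
          Finset.prod_le_one (fun _ _ => norm_nonneg _) fun _ _ => hL

section Tensor

variable {E F A : Type*} [NormedAddCommGroup E] [NormedAddCommGroup F]

theorem norm_prod_pow_le_add (p : E × F) (k : ℕ) : ‖p‖ ^ k ≤ ‖p.1‖ ^ k + ‖p.2‖ ^ k := by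
  rcases max_choice ‖p.1‖ ‖p.2‖ with h | h <;> rw [Prod.norm_def, h] <;> simp

variable [NormedSpace ℝ E] [NormedSpace ℝ F] [NormedRing A] [NormedAlgebra ℝ A]

theorem norm_iteratedFDeriv_mul_fst_snd_le {f : E → A} {g : F → A} {n : ℕ}
    (hf : ContDiff ℝ n f) (hg : ContDiff ℝ n g) (p : E × F) :
    ‖iteratedFDeriv ℝ n (fun p : E × F => f p.1 * g p.2) p‖ ≤
      ∑ i ∈ Finset.range (n + 1), n.choose i *
        ‖iteratedFDeriv ℝ i f p.1‖ * ‖iteratedFDeriv ℝ (n - i) g p.2‖ := by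
  refine (norm_iteratedFDeriv_mul_le (hf.comp contDiff_fst) (hg.comp contDiff_snd) p le_rfl).trans
    (Finset.sum_le_sum fun i hi => ?_)
  gcongr
  · exact norm_iteratedFDeriv_comp_clm_le
      (hf.of_le (mod_cast Finset.mem_range_succ_iff.1 hi))
      (ContinuousLinearMap.norm_fst_le ℝ E F) p
  · exact norm_iteratedFDeriv_comp_clm_le (hg.of_le (mod_cast n.sub_le i))
      (ContinuousLinearMap.norm_snd_le ℝ E F) p

/-- The tensor product `f ⊗ g` of two Schwartz functions, as a Schwartz function on the product
space. The values are multiplied in a normed algebra which need not be commutative. -/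
noncomputable def schwartzTensor (f : 𝓢(E, A)) (g : 𝓢(F, A)) : 𝓢(E × F, A) where
  toFun p := f p.1 * g p.2
  smooth' := ((f.smooth ⊤).comp contDiff_fst).mul ((g.smooth ⊤).comp contDiff_snd)
  decay' k n := by
    refine ⟨∑ i ∈ Finset.range (n + 1), n.choose i *
      (SchwartzMap.seminorm ℝ k i f * SchwartzMap.seminorm ℝ 0 (n - i) g +
        SchwartzMap.seminorm ℝ 0 i f * SchwartzMap.seminorm ℝ k (n - i) g), fun p => ?_⟩
    refine (mul_le_mul (norm_prod_pow_le_add p k)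
      (norm_iteratedFDeriv_mul_fst_snd_le (f.smooth n) (g.smooth n) p)
      (norm_nonneg _) (by positivity)).trans ?_
    rw [Finset.mul_sum]
    refine Finset.sum_le_sum fun i _ => ?_
    set u := ‖iteratedFDeriv ℝ i f p.1‖
    set v := ‖iteratedFDeriv ℝ (n - i) g p.2‖
    calc (‖p.1‖ ^ k + ‖p.2‖ ^ k) * (n.choose i * u * v)
        = n.choose i * ((‖p.1‖ ^ k * u) * (‖p.2‖ ^ 0 * v) +
            (‖p.1‖ ^ 0 * u) * (‖p.2‖ ^ k * v)) := by ring
      _ ≤ _ := by gcongr <;> exact SchwartzMap.le_seminorm ℝ _ _ _ _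

end Tensor

theorem iteratedDeriv_fourierChar (n : ℕ) :
    iteratedDeriv n (fun x : ℝ => (𝐞 x : ℂ)) = fun x => (2 * π * I) ^ n * 𝐞 x := by
  induction n with
  | zero => simp
  | succ n ih =>
    funext x
    rw [iteratedDeriv_succ, ih, deriv_const_mul _ (differentiable_fourierChar x),
      deriv_fourierChar, pow_succ]
    ring

theorem hasTemperateGrowth_fourierChar : (fun x : ℝ => (𝐞 x : ℂ)).HasTemperateGrowth := by
  refine ⟨contDiff_of_differentiable_iteratedDeriv fun n _ => ?_, fun n =>
    ⟨0, (2 * π) ^ n, fun x => ?_⟩⟩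
  · rw [iteratedDeriv_fourierChar]
    exact differentiable_fourierChar.const_mul _
  · rw [norm_iteratedFDeriv_eq_norm_iteratedDeriv, iteratedDeriv_fourierChar, norm_mul,
      Circle.norm_coe]
    simp [abs_of_pos pi_pos]

theorem hasTemperateGrowth_fourierChar_bilin {E F : Type*} [NormedAddCommGroup E]
    [NormedSpace ℝ E] [FiniteDimensional ℝ E] [NormedAddCommGroup F] [NormedSpace ℝ F]
    [FiniteDimensional ℝ F] (B : E →ₗ[ℝ] F →ₗ[ℝ] ℝ) :
    (fun p : E × F => (𝐞 (-B p.1 p.2) : ℂ)).HasTemperateGrowth := by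
  have hB : (fun p : E × F => B p.1 p.2).HasTemperateGrowth :=
    B.toContinuousBilinearMap.bilinear_hasTemperateGrowth
      (ContinuousLinearMap.fst ℝ E F).hasTemperateGrowth
      (ContinuousLinearMap.snd ℝ E F).hasTemperateGrowth
  exact hasTemperateGrowth_fourierChar.comp hB.neg

section Fourier

theorem innerₗ_nondegenerate (V : Type*) [NormedAddCommGroup V] [InnerProductSpace ℝ V] :
    (innerₗ V).Nondegenerate :=
  ⟨fun _ hv => inner_self_eq_zero.1 (hv _), fun _ hv => inner_self_eq_zero.1 (hv _)⟩

theorem exists_linearMap_eq_inner {V W : Type*} [NormedAddCommGroup V] [InnerProductSpace ℝ V]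
    [FiniteDimensional ℝ V] [AddCommGroup W] [Module ℝ W] (B : V →ₗ[ℝ] W →ₗ[ℝ] ℝ) :
    ∃ L : W →ₗ[ℝ] V, ∀ v w, B v w = ⟪v, L w⟫_ℝ := by
  refine ⟨(LinearMap.BilinForm.toDual _ (innerₗ_nondegenerate V)).symm ∘ₗ B.flip, fun v w => ?_⟩
  rw [real_inner_comm]
  exact (LinearMap.BilinForm.apply_toDual_symm_apply (hB := innerₗ_nondegenerate V)
    (B.flip w) v).symm

variable {E W A : Type*} [NormedAddCommGroup E] [NormedSpace ℝ E] [FiniteDimensional ℝ E]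
  [MeasurableSpace E] [BorelSpace E] [NormedAddCommGroup W] [NormedSpace ℝ W]
  [FiniteDimensional ℝ W] [NormedAddCommGroup A] [NormedSpace ℂ A]

theorem exists_schwartzMap_eq_fourierIntegral_of_innerProductSpace {V : Type*}
    [NormedAddCommGroup V] [InnerProductSpace ℝ V] [FiniteDimensional ℝ V] [MeasurableSpace V]
    [BorelSpace V] (μ : Measure V) [μ.IsAddHaarMeasure] {B : V →ₗ[ℝ] W →ₗ[ℝ] ℝ}
    (hB : B.SeparatingRight) (φ : 𝓢(V, A)) :
    ∃ F : 𝓢(W, A), ⇑F = VectorFourier.fourierIntegral 𝐞 μ B φ := by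
  obtain ⟨L, hL⟩ := exists_linearMap_eq_inner B
  have ker_L : LinearMap.ker L = ⊥ :=
    LinearMap.ker_eq_bot'.2 fun w hw => hB w fun v => by rw [hL, hw, inner_zero_right]
  obtain ⟨K, -, antilipschitz_L⟩ := L.exists_antilipschitzWith ker_L
  let c := μ.addHaarScalarFactor (volume : Measure V)
  have hμ : μ = c • volume := Measure.isAddLeftInvariant_eq_smul μ volume
  refine ⟨c • SchwartzMap.compCLMOfAntilipschitz ℂ
    (LinearMap.toContinuousLinearMap L).hasTemperateGrowth antilipschitz_L (𝓕 φ),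
    funext fun w => ?_⟩
  calc c • 𝓕 (φ : V → A) (L w) = c • ∫ v, 𝐞 (-B v w) • φ v := by simp only [Real.fourier_eq, hL]
    _ = ∫ v, 𝐞 (-B v w) • φ v ∂μ := by rw [hμ, integral_smul_nnreal_measure]

theorem exists_schwartzMap_eq_fourierIntegral (μ : Measure E) [μ.IsAddHaarMeasure]
    {B : E →ₗ[ℝ] W →ₗ[ℝ] ℝ} (hB : B.SeparatingRight) (φ : 𝓢(E, A)) :
    ∃ F : 𝓢(W, A), ⇑F = VectorFourier.fourierIntegral 𝐞 μ B φ := by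
  let e : E ≃L[ℝ] EuclideanSpace ℝ (Fin (Module.finrank ℝ E)) := toEuclidean
  have : (μ.map e).IsAddHaarMeasure := e.isAddHaarMeasure_map μ
  obtain ⟨F, hF⟩ := exists_schwartzMap_eq_fourierIntegral_of_innerProductSpace (μ.map e)
    (B := B ∘ₗ e.symm.toLinearMap)
    (fun w hw => hB w fun v => by simpa using hw (e v))
    (SchwartzMap.compCLMOfContinuousLinearEquiv ℂ e.symm φ)
  refine ⟨F, hF.trans <| funext fun w => ?_⟩
  exact (integral_map_equiv e.toHomeomorph.toMeasurableEquiv _).trans <| by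
    simp [VectorFourier.fourierIntegral]

end Fourier

section TwistedProduct

theorem continuous_bilin_comp {X E : Type*} [TopologicalSpace X] [NormedAddCommGroup E]
    [NormedSpace ℝ E] [FiniteDimensional ℝ E] (σ : E →ₗ[ℝ] E →ₗ[ℝ] ℝ) {a b : X → E}
    (ha : Continuous a) (hb : Continuous b) : Continuous fun x => σ (a x) (b x) :=
  (σ.toContinuousBilinearMap.continuous.comp ha).clm_apply hb

section Integral

variable {X V : Type*} [MeasurableSpace X] [NormedAddCommGroup V] [NormedSpace ℂ V]
  {ν : Measure X}

theorem integral_circle_smul (c : Circle) (F : X → V) : ∫ x, c • F x ∂ν = c • ∫ x, F x ∂ν :=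
  integral_smul (c : ℂ) F

theorem integrable_fourierChar_smul [TopologicalSpace X] [OpensMeasurableSpace X] {F : X → V}
    (hF : Integrable F ν) {ψ : X → ℝ} (hψ : Continuous ψ) :
    Integrable (fun x => 𝐞 (ψ x) • F x) ν := by
  refine (integrable_norm_iff ?_).1 (by simpa only [Circle.norm_smul] using hF.norm)
  exact (continuous_fourierChar.comp hψ).aestronglyMeasurable.fun_smul hF.1

theorem integrable_mul_bdd_mul {Y R : Type*} [MeasurableSpace Y] [NormedRing R]
    [TopologicalSpace X] [TopologicalSpace Y] [OpensMeasurableSpace (X × Y)]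
    [SecondCountableTopology (X × Y)] {ν' : Measure Y} [SFinite ν'] {F : X → R}
    {G : X × Y → R} {H : Y → R} {C : ℝ} (hF : Integrable F ν) (hG : Continuous G)
    (hC : ∀ p, ‖G p‖ ≤ C) (hH : Integrable H ν') :
    Integrable (fun p : X × Y => F p.1 * G p * H p.2) (ν.prod ν') := by
  have measurable_FGH : AEStronglyMeasurable (fun p : X × Y => F p.1 * G p * H p.2)
      (ν.prod ν') := (hF.1.comp_fst.mul hG.aestronglyMeasurable).mul hH.1.comp_snd
  refine ((hF.norm.mul_prod hH.norm).const_mul C).mono' measurable_FGH <| .of_forall fun p => ?_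
  calc ‖F p.1 * G p * H p.2‖ ≤ ‖F p.1‖ * ‖G p‖ * ‖H p.2‖ := norm_mul₃_le
    _ ≤ ‖F p.1‖ * C * ‖H p.2‖ := by gcongr; exact hC p
    _ = C * (‖F p.1‖ * ‖H p.2‖) := by ring

end Integral

variable {E A : Type*} [NormedAddCommGroup E] [NormedSpace ℝ E] [MeasurableSpace E]

/-- The symplectic Fourier transform `f̂ u = ∫ 𝐞 (-σ p u) • f p` with respect to a bilinear form
`σ` and a measure `μ`; no normalisation relates `μ` to `σ`. -/
noncomputable def symplecticFourier [NormedAddCommGroup A] [NormedSpace ℂ A]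
    (σ : E →ₗ[ℝ] E →ₗ[ℝ] ℝ) (μ : Measure E) (f : E → A) : E → A :=
  VectorFourier.fourierIntegral 𝐞 μ σ f

variable [NormedRing A] [NormedAlgebra ℂ A]

/-- The twisted (Moyal) product of functions on a vector space with a bilinear form `σ`, in its
integral form. The three summands of the phase are `σ` on the edges of the oriented triangle with
vertices `p`, `q`, `z`; recall that `𝐞 x = exp (2πix)`. -/
noncomputable def twistedProduct (σ : E →ₗ[ℝ] E →ₗ[ℝ] ℝ) (μ : Measure E) (f g : E → A) (z : E) :
    A :=
  ∫ p : E × E, 𝐞 (-(σ p.1 p.2 + σ p.2 z + σ z p.1)) • (f p.1 * g p.2) ∂μ.prod μ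

variable [FiniteDimensional ℝ E] [BorelSpace E] {σ : E →ₗ[ℝ] E →ₗ[ℝ] ℝ} {μ : Measure E}

theorem integrable_twistedProduct_integrand {f g : E → A} (hf : Integrable f μ)
    (hg : Integrable g μ) (z : E) :
    Integrable (fun p : E × E => 𝐞 (-(σ p.1 p.2 + σ p.2 z + σ z p.1)) • (f p.1 * g p.2))
      (μ.prod μ) :=
  integrable_fourierChar_smul (hf.mul_prod hg) <|
    (((continuous_bilin_comp σ continuous_fst continuous_snd).add
      (continuous_bilin_comp σ continuous_snd continuous_const)).add
      (continuous_bilin_comp σ continuous_const continuous_fst)).neg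

theorem integrable_fourierChar_bilin_smul {f : E → A} (hf : Integrable f μ) (u : E) :
    Integrable (fun p => 𝐞 (-σ p u) • f p) μ :=
  integrable_fourierChar_smul hf (continuous_bilin_comp σ continuous_id continuous_const).neg

variable [μ.IsAddHaarMeasure]

theorem twistedProduct_eq_integral_symplecticFourier_mul (hσ : σ.IsAlt) {f g : E → A}
    (hf : Integrable f μ) (hg : Integrable g μ) (z : E) :
    twistedProduct σ μ f g z =
      ∫ u, 𝐞 (-σ u z) • (symplecticFourier σ μ f u * g (z + u)) ∂μ := by
  rw [twistedProduct, integral_prod_symm _ (integrable_twistedProduct_integrand hf hg z),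
    ← integral_add_left_eq_self _ z]
  refine integral_congr_ae <| .of_forall fun u => ?_
  have phase (p : E) : -(σ p (z + u) + σ (z + u) z + σ z p) = -σ u z + -σ p u := by
    simp only [map_add, LinearMap.add_apply, hσ.self_eq_zero]
    linarith [hσ.neg p z]
  calc ∫ p, 𝐞 (-(σ p (z + u) + σ (z + u) z + σ z p)) • (f p * g (z + u)) ∂μ
      = 𝐞 (-σ u z) • ∫ p, (𝐞 (-σ p u) • f p) * g (z + u) ∂μ := by
        simp only [phase, AddChar.map_add_eq_mul, mul_smul, integral_circle_smul, smul_mul_assoc]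
    _ = 𝐞 (-σ u z) • (symplecticFourier σ μ f u * g (z + u)) := by
        rw [integral_mul_const_of_integrable (integrable_fourierChar_bilin_smul hf u)]
        rfl

theorem twistedProduct_eq_integral_mul_symplecticFourier (hσ : σ.IsAlt) {f g : E → A}
    (hf : Integrable f μ) (hg : Integrable g μ) (z : E) :
    twistedProduct σ μ f g z =
      ∫ v, 𝐞 (-σ v z) • (f (z - v) * symplecticFourier σ μ g v) ∂μ := by
  rw [twistedProduct, integral_prod _ (integrable_twistedProduct_integrand hf hg z),
    ← integral_sub_left_eq_self _ _ z]
  refine integral_congr_ae <| .of_forall fun v => ?_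
  have phase (q : E) : -(σ (z - v) q + σ q z + σ z (z - v)) = -σ v z + -σ q v := by
    simp only [map_sub, LinearMap.sub_apply, hσ.self_eq_zero]
    linarith [hσ.neg q z, hσ.neg q v, hσ.neg v z]
  calc ∫ q, 𝐞 (-(σ (z - v) q + σ q z + σ z (z - v))) • (f (z - v) * g q) ∂μ
      = 𝐞 (-σ v z) • ∫ q, f (z - v) * (𝐞 (-σ q v) • g q) ∂μ := by
        simp only [phase, AddChar.map_add_eq_mul, mul_smul, integral_circle_smul, mul_smul_comm]
    _ = 𝐞 (-σ v z) • (f (z - v) * symplecticFourier σ μ g v) := by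
        rw [integral_const_mul_of_integrable (integrable_fourierChar_bilin_smul hg v)]
        rfl

theorem integrable_symplecticFourier (hσ' : σ.SeparatingRight) (f : 𝓢(E, A)) :
    Integrable (symplecticFourier σ μ f) μ := by
  obtain ⟨F, hF⟩ := exists_schwartzMap_eq_fourierIntegral μ hσ' f
  rw [symplecticFourier, ← hF]
  exact F.integrable

theorem exists_schwartzMap_eq_twistedProduct (hσ : σ.IsAlt) (hσ' : σ.SeparatingRight)
    (f g : 𝓢(E, A)) : ∃ F : 𝓢(E, A), ⇑F = twistedProduct σ μ f g := by
  let Φ : 𝓢(E × E, A) := SchwartzMap.smulLeftCLM A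
    (fun p : E × E => (𝐞 (-σ p.1 p.2) : ℂ)) (schwartzTensor f g)
  let B : E × E →ₗ[ℝ] E →ₗ[ℝ] ℝ := σ ∘ₗ (LinearMap.snd ℝ E E - LinearMap.fst ℝ E E)
  have hB : B.SeparatingRight := fun z hz => hσ' z fun p => by simpa [B] using hz (0, p)
  obtain ⟨F, hF⟩ := exists_schwartzMap_eq_fourierIntegral (μ.prod μ) hB Φ
  refine ⟨F, hF.trans <| funext fun z => integral_congr_ae <| .of_forall fun p => ?_⟩
  have phase : -(σ p.1 p.2 + σ p.2 z + σ z p.1) = -B p z + -σ p.1 p.2 := by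
    simp only [B, LinearMap.comp_apply, LinearMap.sub_apply, LinearMap.fst_apply,
      LinearMap.snd_apply, map_sub]
    linarith [hσ.neg p.1 z]
  have hΦ : Φ p = 𝐞 (-σ p.1 p.2) • (f p.1 * g p.2) :=
    SchwartzMap.smulLeftCLM_apply_apply (hasTemperateGrowth_fourierChar_bilin σ) _ p
  simp only [phase, hΦ, AddChar.map_add_eq_mul, mul_smul]

theorem integrable_twistedProduct (hσ : σ.IsAlt) (hσ' : σ.SeparatingRight) (f g : 𝓢(E, A)) :
    Integrable (twistedProduct σ μ f g) μ := by
  obtain ⟨F, hF⟩ := exists_schwartzMap_eq_twistedProduct (μ := μ) hσ hσ' f g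
  exact hF ▸ F.integrable

theorem twistedProduct_twistedProduct_left (hσ : σ.IsAlt) (hσ' : σ.SeparatingRight)
    (f g h : 𝓢(E, A)) (z : E) :
    twistedProduct σ μ (twistedProduct σ μ f g) h z =
      ∫ v, ∫ u, 𝐞 (-(σ u z + σ v z + σ v u)) •
        (symplecticFourier σ μ f u * g (z + u - v) * symplecticFourier σ μ h v) ∂μ ∂μ := by
  rw [twistedProduct_eq_integral_mul_symplecticFourier hσ (integrable_twistedProduct hσ hσ' f g)
    h.integrable]
  refine integral_congr_ae <| .of_forall fun v => ?_
  set H := symplecticFourier σ μ h v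
  have phase (u : E) : -(σ u z + σ v z + σ v u) = -σ v z + -σ u (z - v) := by
    rw [← hσ.neg u v, map_sub]
    ring
  have integrable_inner : Integrable (fun u => 𝐞 (-σ u (z - v)) •
      (symplecticFourier σ μ f u * g (z + u - v))) μ :=
    integrable_fourierChar_bilin_smul ((integrable_symplecticFourier hσ' f).mul_bdd
      (by fun_prop) (.of_forall fun u => g.norm_le_seminorm ℝ _)) _
  calc 𝐞 (-σ v z) • (twistedProduct σ μ f g (z - v) * H)
      = 𝐞 (-σ v z) • ((∫ u, 𝐞 (-σ u (z - v)) •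
          (symplecticFourier σ μ f u * g (z + u - v)) ∂μ) * H) := by
        simp only [twistedProduct_eq_integral_symplecticFourier_mul hσ f.integrable g.integrable,
          sub_add_eq_add_sub]
    _ = ∫ u, 𝐞 (-(σ u z + σ v z + σ v u)) •
          (symplecticFourier σ μ f u * g (z + u - v) * H) ∂μ := by
        simp only [← integral_mul_const_of_integrable integrable_inner, phase,
          AddChar.map_add_eq_mul, mul_smul, integral_circle_smul, smul_mul_assoc]

theorem twistedProduct_twistedProduct_right (hσ : σ.IsAlt) (hσ' : σ.SeparatingRight)
    (f g h : 𝓢(E, A)) (z : E) :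
    twistedProduct σ μ f (twistedProduct σ μ g h) z =
      ∫ u, ∫ v, 𝐞 (-(σ u z + σ v z + σ v u)) •
        (symplecticFourier σ μ f u * g (z + u - v) * symplecticFourier σ μ h v) ∂μ ∂μ := by
  rw [twistedProduct_eq_integral_symplecticFourier_mul hσ f.integrable
    (integrable_twistedProduct hσ hσ' g h)]
  refine integral_congr_ae <| .of_forall fun u => ?_
  set F := symplecticFourier σ μ f u
  have phase (v : E) : -(σ u z + σ v z + σ v u) = -σ u z + -σ v (z + u) := by
    rw [map_add]
    ring
  have integrable_inner : Integrable (fun v => 𝐞 (-σ v (z + u)) •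
      (g (z + u - v) * symplecticFourier σ μ h v)) μ :=
    integrable_fourierChar_bilin_smul ((integrable_symplecticFourier hσ' h).bdd_mul
      (by fun_prop) (.of_forall fun v => g.norm_le_seminorm ℝ _)) _
  calc 𝐞 (-σ u z) • (F * twistedProduct σ μ g h (z + u))
      = 𝐞 (-σ u z) • (F * ∫ v, 𝐞 (-σ v (z + u)) •
          (g (z + u - v) * symplecticFourier σ μ h v) ∂μ) := by
        rw [twistedProduct_eq_integral_mul_symplecticFourier hσ g.integrable h.integrable]
    _ = ∫ v, 𝐞 (-(σ u z + σ v z + σ v u)) •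
          (F * g (z + u - v) * symplecticFourier σ μ h v) ∂μ := by
        simp only [← integral_const_mul_of_integrable integrable_inner, phase,
          AddChar.map_add_eq_mul, mul_smul, integral_circle_smul, mul_smul_comm, mul_assoc]

theorem integrable_twistedProduct_twistedProduct_integrand (hσ' : σ.SeparatingRight)
    (f g h : 𝓢(E, A)) (z : E) :
    Integrable (fun p : E × E => 𝐞 (-(σ p.1 z + σ p.2 z + σ p.2 p.1)) •
      (symplecticFourier σ μ f p.1 * g (z + p.1 - p.2) * symplecticFourier σ μ h p.2))
      (μ.prod μ) :=
  integrable_fourierChar_smul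
    (integrable_mul_bdd_mul (G := fun p => g (z + p.1 - p.2))
      (integrable_symplecticFourier hσ' f) (by fun_prop) (fun _ => g.norm_le_seminorm ℝ _)
      (integrable_symplecticFourier hσ' h)) <|
    (((continuous_bilin_comp σ continuous_fst continuous_const).add
      (continuous_bilin_comp σ continuous_snd continuous_const)).add
      (continuous_bilin_comp σ continuous_snd continuous_fst)).neg

theorem twistedProduct_assoc (hσ : σ.IsAlt) (hσ' : σ.SeparatingRight) (f g h : 𝓢(E, A)) :
    twistedProduct σ μ (twistedProduct σ μ f g) h =
      twistedProduct σ μ f (twistedProduct σ μ g h) := by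
  funext z
  rw [twistedProduct_twistedProduct_left hσ hσ', twistedProduct_twistedProduct_right hσ hσ']
  exact (integral_integral_swap
    (integrable_twistedProduct_twistedProduct_integrand hσ' f g h z)).symm

end TwistedProduct

theorem star_schwartz_and_assoc_general {E A : Type*} [NormedAddCommGroup E] [NormedSpace ℝ E]
    [FiniteDimensional ℝ E] [MeasurableSpace E] [BorelSpace E] [NormedRing A] [NormedAlgebra ℂ A]
    [CompleteSpace A] (μ : Measure E) [μ.IsAddHaarMeasure] {σ : E →ₗ[ℝ] E →ₗ[ℝ] ℝ}
    (hσ : σ.IsAlt) (hσ' : σ.SeparatingRight) :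
    (∀ f g : 𝓢(E, A), ∃ F : 𝓢(E, A), ⇑F = twistedProduct σ μ f g) ∧
    (∀ f g h : 𝓢(E, A), twistedProduct σ μ (twistedProduct σ μ f g) h =
      twistedProduct σ μ f (twistedProduct σ μ g h)) :=
  ⟨exists_schwartzMap_eq_twistedProduct hσ hσ', twistedProduct_assoc hσ hσ'⟩

theorem separatingRight_smul {R M N : Type*} [CommRing R] [NoZeroDivisors R] [AddCommGroup M]
    [Module R M] [AddCommGroup N] [Module R N] {B : M →ₗ[R] N →ₗ[R] R} {c : R} (hc : c ≠ 0)
    (hB : B.SeparatingRight) : (c • B).SeparatingRight := fun y hy =>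
  hB y fun x => (mul_eq_zero_iff_left hc).1 (hy x)

section StandardForm

variable (R ι : Type*) [CommRing R] [Fintype ι]

/-- The standard symplectic form `ω (x, w) (x', w') = ⟨x, w'⟩ - ⟨w, x'⟩` on the phase space
`R^ι × R^ι` of points `(x, w)`. -/
def standardSymplecticForm : (ι → R) × (ι → R) →ₗ[R] (ι → R) × (ι → R) →ₗ[R] R :=
  (dotProductBilin R R).compl₁₂ (.fst R _ _) (.snd R _ _) -
    (dotProductBilin R R).compl₁₂ (.snd R _ _) (.fst R _ _)

variable {R ι}

theorem standardSymplecticForm_apply (p q : (ι → R) × (ι → R)) :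
    standardSymplecticForm R ι p q = p.1 ⬝ᵥ q.2 - p.2 ⬝ᵥ q.1 := rfl

theorem isAlt_standardSymplecticForm : (standardSymplecticForm R ι).IsAlt := fun p => by
  rw [standardSymplecticForm_apply, dotProduct_comm, sub_self]

theorem separatingRight_standardSymplecticForm :
    (standardSymplecticForm R ι).SeparatingRight := fun q hq => by
  refine Prod.ext (dotProduct_eq_zero _ fun v => ?_) (dotProduct_eq_zero _ fun v => ?_)
  · simpa [standardSymplecticForm_apply, dotProduct_comm] using hq (0, v)
  · simpa [standardSymplecticForm_apply, dotProduct_comm] using hq (v, 0)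

theorem sum_sub_mul_eq_neg_standardSymplecticForm (p q z : (ι → R) × (ι → R)) :
    ∑ i, (q.1 i - z.1 i) * p.2 i + ∑ i, (z.1 i - p.1 i) * q.2 i + ∑ i, (p.1 i - q.1 i) * z.2 i =
      -(standardSymplecticForm R ι p q + standardSymplecticForm R ι q z +
        standardSymplecticForm R ι z p) := by
  simp only [standardSymplecticForm_apply, dotProduct, ← Finset.sum_sub_distrib,
    ← Finset.sum_add_distrib, ← Finset.sum_neg_distrib]
  exact Finset.sum_congr rfl fun i _ => by ring

end StandardForm

theorem cexp_two_mul_I_div_mul_neg_eq_fourierChar (θ t : ℝ) :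
    cexp (2 * I / (θ : ℂ) * ((-t : ℝ) : ℂ)) = 𝐞 (-((π * θ)⁻¹ * t)) := by
  rw [Real.fourierChar_apply]
  congr 1
  push_cast
  field_simp [pi_ne_zero]

theorem zpow_neg_two_mul_eq_norm_zpow_mul_norm_zpow (x : ℝ) (d : ℕ) :
    x ^ (-(2 * d : ℤ)) = ‖x‖ ^ (-d : ℤ) * ‖x‖ ^ (-d : ℤ) := by
  rw [← mul_zpow, norm_eq_abs, abs_mul_abs_self, ← zpow_two, ← zpow_mul, mul_neg]

theorem sprod_eq_twistedProduct (d : ℕ) (θ : ℝ) (f g : (Fin d → ℝ) × (Fin d → ℝ) → ℂ) :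
    sprod d θ f g = twistedProduct ((π * θ)⁻¹ • standardSymplecticForm ℝ (Fin d))
      (‖π * θ‖₊ ^ (-d : ℤ) • volume.prod volume) f g := by
  funext z
  simp only [sprod, twistedProduct, Measure.prod_smul_left, Measure.prod_smul_right,
    integral_smul_nnreal_measure, sum_sub_mul_eq_neg_standardSymplecticForm,
    cexp_two_mul_I_div_mul_neg_eq_fourierChar, zpow_neg_two_mul_eq_norm_zpow_mul_norm_zpow,
    LinearMap.smul_apply, smul_eq_mul, Circle.smul_def, smul_smul, NNReal.smul_def,
    Complex.real_smul, NNReal.coe_mul, NNReal.coe_zpow, coe_nnnorm, mul_comm (f _ * g _),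
    ← mul_add, Measure.volume_eq_prod]

theorem star_schwartz_and_assoc (d : ℕ) (θ : ℝ) (hθ : 0 < θ) :
    (∀ f g : SchwartzMap ((Fin d → ℝ) × (Fin d → ℝ)) ℂ,
      ∃ F : SchwartzMap ((Fin d → ℝ) × (Fin d → ℝ)) ℂ, ⇑F = sprod d θ f g) ∧
    (∀ f g h : SchwartzMap ((Fin d → ℝ) × (Fin d → ℝ)) ℂ,
      sprod d θ (sprod d θ f g) h = sprod d θ f (sprod d θ g h)) := by
  have hc : π * θ ≠ 0 := by positivity
  have haar_volume := Measure.prod.instIsAddHaarMeasure (volume : Measure (Fin d → ℝ))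
    (volume : Measure (Fin d → ℝ))
  have haar_smul := haar_volume.nnreal_smul _ (zpow_ne_zero (-d : ℤ) (nnnorm_ne_zero_iff.2 hc))
  simpa only [sprod_eq_twistedProduct] using star_schwartz_and_assoc_general _
    (LinearMap.BilinForm.IsAlt.smul (B := standardSymplecticForm ℝ (Fin d)) _
      isAlt_standardSymplecticForm)
    (separatingRight_smul (inv_ne_zero hc) separatingRight_standardSymplecticForm)
end

section
/- For all Schwartz functions f, g : ℝ^d × ℝ^d → ℂ and every z ∈ ℝ^d × ℝ^d, the star product is a deformation in the direction of the Poisson bracket: lim_{θ → 0⁺} (1/θ) ((f ⋆_θ g)(z) − (g ⋆_θ f)(z)) = −i {f,g}(z), where {f,g}(x,w) = Σ_{i=1}^d (∂_{x_i} f · ∂_{w_i} g − ∂_{w_i} f · ∂_{x_i} g)(x,w). -/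
open MeasureTheory Complex Real Filter Topology

/-- The standard Poisson bracket
`{f,g} = Σᵢ (∂_{xᵢ} f · ∂_{wᵢ} g − ∂_{wᵢ} f · ∂_{xᵢ} g)` on `ℝ^d × ℝ^d`. -/
noncomputable def poisson (d : ℕ) (f g : (Fin d → ℝ) × (Fin d → ℝ) → ℂ)
    (z : (Fin d → ℝ) × (Fin d → ℝ)) : ℂ :=
  ∑ i : Fin d,
    (fderiv ℝ f z (Pi.single i 1, 0) * fderiv ℝ g z (0, Pi.single i 1) -
      fderiv ℝ f z (0, Pi.single i 1) * fderiv ℝ g z (Pi.single i 1, 0))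

/-!
Translating `z` to the origin turns `f`, `g` into `F`, `G` and the star product at `z` into an
oscillatory integral with phase `-(2 / θ) ⟪u, J v⟫`, where `J (x, w) = (w, -x)`. Its `v`-integral is
a Fourier transform, so after rescaling `u` it equals `∫ F (θ π J ξ) * 𝓕 G ξ`. This is
differentiable at `θ = 0`: Fourier inversion gives the value `F 0 * G 0`, and the derivative only
involves first moments of `𝓕 G`, that is, first derivatives of `G` at `0`. The derivative is `-i/2`
times the Poisson bracket, whose antisymmetry doubles it in the commutator.
-/

open scoped FourierTransform LineDeriv RealInnerProductSpace SchwartzMap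

section Schwartz

variable {V E : Type*} [NormedAddCommGroup V] [NormedAddCommGroup E]

lemma exists_lipschitzWith_schwartzMap [NormedSpace ℝ V] [NormedSpace ℝ E] (F : 𝓢(V, E)) :
    ∃ K, LipschitzWith K F :=
  ⟨_, lipschitzWith_of_nnnorm_fderiv_le (C := ⟨_, apply_nonneg _ _⟩) F.differentiable fun x =>
    SchwartzMap.norm_le_seminorm ℝ (SchwartzMap.fderivCLM ℝ V E F) x⟩

variable [InnerProductSpace ℝ V] [FiniteDimensional ℝ V] [MeasurableSpace V] [BorelSpace V]

lemma integrable_inner_smul_schwartzMap [NormedSpace ℝ E] (F : 𝓢(V, E)) (m : V) :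
    Integrable fun ξ => ⟪ξ, m⟫ • F ξ := by
  have hm : (fun ξ : V => ⟪ξ, m⟫).HasTemperateGrowth := by fun_prop
  simpa only [SchwartzMap.smulLeftCLM_apply hm] using
    (SchwartzMap.smulLeftCLM E (fun ξ : V => ⟪ξ, m⟫) F).integrable

variable [NormedSpace ℂ E] [CompleteSpace E]

lemma integral_fourier_eq_apply_zero (G : 𝓢(V, E)) : ∫ ξ, 𝓕 G ξ = G 0 := by
  have inversion : 𝓕⁻ (𝓕 G) 0 = G 0 := by rw [FourierTransform.fourierInv_fourier_eq]
  rw [SchwartzMap.fourierInv_coe, Real.fourierInv_eq] at inversion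
  simpa using inversion

lemma integral_inner_smul_fourier (G : 𝓢(V, E)) (m : V) :
    ∫ ξ, ⟪ξ, m⟫ • 𝓕 G ξ = (2 * π * I)⁻¹ • fderiv ℝ G 0 m := by
  have hm : (fun ξ : V => ⟪ξ, m⟫).HasTemperateGrowth := by fun_prop
  rw [eq_inv_smul_iff₀ Complex.two_pi_I_ne_zero, ← SchwartzMap.lineDerivOp_apply_eq_fderiv,
    ← integral_fourier_eq_apply_zero, SchwartzMap.fourier_lineDerivOp_eq, ← integral_smul]
  simp [SchwartzMap.smulLeftCLM_apply_apply hm]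

end Schwartz

lemma hasDerivAt_integral_comp_add_smul {α V E : Type*} [MeasurableSpace α] {μ : Measure α}
    [NormedAddCommGroup V] [NormedSpace ℝ V] [NormedAddCommGroup E] [NormedSpace ℂ E]
    {F : V → ℂ} {K : NNReal} {x : V} {u : α → V} {H : α → E}
    (hF : LipschitzWith K F) (hFx : DifferentiableAt ℝ F x)
    (hu : AEStronglyMeasurable u μ) (hH : Integrable H μ)
    (huH : Integrable (fun a => ‖u a‖ * ‖H a‖) μ) :
    HasDerivAt (fun t : ℝ => ∫ a, F (x + t • u a) • H a ∂μ)
      (∫ a, fderiv ℝ F x (u a) • H a ∂μ) 0 := by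
  refine (hasDerivAt_integral_of_dominated_loc_of_lip (s := Set.univ)
    (bound := fun a => K * (‖u a‖ * ‖H a‖)) univ_mem ?_ ?_ ?_ ?_ (huH.const_mul _) ?_).2
  · exact .of_forall fun t =>
      (hF.continuous.comp_aestronglyMeasurable ((hu.const_smul t).const_add x)).smul hH.1
  · simpa using hH.fun_smul (F x)
  · exact ((fderiv ℝ F x).continuous.comp_aestronglyMeasurable hu).smul hH.1
  · refine .of_forall fun a => LipschitzOnWith.of_dist_le_mul fun s _ t _ => ?_
    calc dist (F (x + s • u a) • H a) (F (x + t • u a) • H a)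
        = dist (F (x + s • u a)) (F (x + t • u a)) * ‖H a‖ := by
          rw [dist_eq_norm, ← sub_smul, norm_smul, dist_eq_norm]
      _ ≤ K * dist (x + s • u a) (x + t • u a) * ‖H a‖ := by
          gcongr
          exact hF.dist_le_mul _ _
      _ = K * (‖u a‖ * ‖H a‖) * dist s t := by
          rw [dist_add_left, dist_eq_norm, ← sub_smul, norm_smul, ← dist_eq_norm]
          ring
      _ = Real.nnabs (K * (‖u a‖ * ‖H a‖)) * dist s t := by
          rw [Real.coe_nnabs, abs_of_nonneg (by positivity)]
  · refine .of_forall fun a => ?_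
    have hline : HasDerivAt (fun t : ℝ => x + t • u a) (u a) 0 := by
      simpa using ((hasDerivAt_id (0 : ℝ)).smul_const (u a)).const_add x
    have hFx' : HasFDerivAt F (fderiv ℝ F x) (x + (0 : ℝ) • u a) := by simpa using hFx.hasFDerivAt
    exact (hFx'.comp_hasDerivAt 0 hline).smul_const (H a)

section TwistedPairing

variable {V : Type*} [NormedAddCommGroup V] [InnerProductSpace ℝ V] [MeasurableSpace V]
  [BorelSpace V] [FiniteDimensional ℝ V]

/-- The star product at the origin in coordinates that make the symplectic form `⟪u, J v⟫`; it makes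
sense for any isometry `J` of a Euclidean space. -/
noncomputable def twistedPairing (J : V ≃ₗᵢ[ℝ] V) (θ : ℝ) (F G : V → ℂ) : ℂ :=
  ((π * θ) ^ Module.finrank ℝ V)⁻¹ •
    ∫ p : V × V, F p.1 * G p.2 * cexp (2 * I / θ * (-⟪p.1, J p.2⟫ : ℝ))

lemma integrable_mul_cexp_neg_inner (J : V ≃ₗᵢ[ℝ] V) (θ : ℝ) {F G : V → ℂ}
    (hF : Integrable F) (hG : Integrable G) :
    Integrable fun p : V × V => F p.1 * G p.2 * cexp (2 * I / θ * (-⟪p.1, J p.2⟫ : ℝ)) := by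
  refine (hF.mul_prod hG).mul_bdd (c := 1) (by fun_prop) (.of_forall fun p => le_of_eq ?_)
  have : 2 * I / θ * (-⟪p.1, J p.2⟫ : ℝ) = (2 / θ * -⟪p.1, J p.2⟫ : ℝ) * I := by
    push_cast
    ring
  rw [this, Complex.norm_exp_ofReal_mul_I]

lemma integral_mul_cexp_neg_inner_eq_fourier (J : V ≃ₗᵢ[ℝ] V) (θ : ℝ) (G : V → ℂ) (u : V) :
    ∫ v, G v * cexp (2 * I / θ * (-⟪u, J v⟫ : ℝ)) = 𝓕 G ((π * θ)⁻¹ • J.symm u) := by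
  rw [Real.fourier_eq']
  refine integral_congr_ae (.of_forall fun v => ?_)
  have phase : 2 * I / θ * (-⟪u, J v⟫ : ℝ) = (-2 * π * ⟪v, (π * θ)⁻¹ • J.symm u⟫ : ℝ) * I := by
    have : (π : ℂ) ≠ 0 := mod_cast Real.pi_ne_zero
    rw [inner_smul_right, ← J.inner_map_map v, J.apply_symm_apply, real_inner_comm]
    push_cast
    field_simp
  simp only [phase, smul_eq_mul]
  exact mul_comm _ _

lemma twistedPairing_eq_integral_fourier (J : V ≃ₗᵢ[ℝ] V) {θ : ℝ} (hθ : 0 < θ) {F G : V → ℂ}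
    (hF : Integrable F) (hG : Integrable G) :
    twistedPairing J θ F G = ∫ ξ, F (θ • π • J ξ) * 𝓕 G ξ := by
  have hπθ : 0 < π * θ := by positivity
  let Φ : V → ℂ := fun u => F u * 𝓕 G ((π * θ)⁻¹ • J.symm u)
  calc twistedPairing J θ F G
      = ((π * θ) ^ Module.finrank ℝ V)⁻¹ • ∫ u, Φ u := by
        rw [twistedPairing, Measure.volume_eq_prod,
          integral_prod _ (integrable_mul_cexp_neg_inner J θ hF hG)]
        simp only [mul_assoc (F _), integral_const_mul, integral_mul_cexp_neg_inner_eq_fourier, Φ]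
    _ = ∫ u, Φ ((π * θ) • u) :=
        (Measure.integral_comp_smul_of_nonneg volume Φ (π * θ) (hR := hπθ.le)).symm
    _ = ∫ ξ, Φ ((π * θ) • J ξ) :=
        (J.measurePreserving.integral_comp' (f := J.toMeasurableEquiv) _).symm
    _ = ∫ ξ, F (θ • π • J ξ) * 𝓕 G ξ := by
        simp only [Φ, map_smul, J.symm_apply_apply, inv_smul_smul₀ hπθ.ne', smul_smul θ π,
          mul_comm θ π]

lemma integral_clm_mul_fourier {ι : Type*} [Fintype ι] (b : OrthonormalBasis ι ℝ V)
    (L : V →L[ℝ] ℂ) (G : 𝓢(V, ℂ)) :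
    ∫ ξ, L ξ * 𝓕 G ξ = (2 * π * I)⁻¹ * ∑ j, L (b j) * fderiv ℝ G 0 (b j) := by
  have expansion (ξ : V) : L ξ * 𝓕 G ξ = ∑ j, L (b j) * (⟪ξ, b j⟫ • 𝓕 G ξ) := by
    have hL : L ξ = ∑ j, ⟪ξ, b j⟫ • L (b j) := by
      simp only [← map_smul, ← map_sum, real_inner_comm (b _) ξ, b.sum_repr']
    simp only [hL, Finset.sum_mul, smul_mul_assoc, mul_smul_comm]
  simp only [expansion]
  rw [integral_finsetSum _ fun j _ =>
    (integrable_inner_smul_schwartzMap (𝓕 G) (b j)).const_mul (L (b j))]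
  simp only [integral_const_mul, integral_inner_smul_fourier, smul_eq_mul, mul_left_comm (L _),
    Finset.mul_sum]

lemma tendsto_inv_smul_twistedPairing_sub {ι : Type*} [Fintype ι] (b : OrthonormalBasis ι ℝ V)
    (J : V ≃ₗᵢ[ℝ] V) (F G : 𝓢(V, ℂ)) :
    Tendsto (fun θ : ℝ => θ⁻¹ • (twistedPairing J θ F G - F 0 * G 0)) (𝓝[>] 0)
      (𝓝 (-(I / 2) * ∑ j, fderiv ℝ F 0 (J (b j)) * fderiv ℝ G 0 (b j))) := by
  obtain ⟨K, hK⟩ := exists_lipschitzWith_schwartzMap F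
  have moment : Integrable fun ξ => ‖π • J ξ‖ * ‖𝓕 G ξ‖ := by
    have h := ((𝓕 G).integrable_pow_mul volume 1).const_mul ‖π‖
    simpa only [norm_smul, J.norm_map, pow_one, mul_assoc] using h
  have hderiv := hasDerivAt_integral_comp_add_smul hK (F.differentiableAt (x := 0))
    (by fun_prop : Continuous fun ξ => π • J ξ).aestronglyMeasurable (𝓕 G).integrable moment
  have value : ∫ ξ, fderiv ℝ F 0 (π • J ξ) • 𝓕 G ξ =
      -(I / 2) * ∑ j, fderiv ℝ F 0 (J (b j)) * fderiv ℝ G 0 (b j) := by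
    have hπ : (π : ℂ) ≠ 0 := mod_cast Real.pi_ne_zero
    let L : V →L[ℝ] ℂ := fderiv ℝ F 0 ∘L (π • (J : V →L[ℝ] V))
    calc ∫ ξ, fderiv ℝ F 0 (π • J ξ) • 𝓕 G ξ
        = (2 * π * I)⁻¹ * ∑ j, L (b j) * fderiv ℝ G 0 (b j) := integral_clm_mul_fourier b L G
      _ = (2 * π * I)⁻¹ * π * ∑ j, fderiv ℝ F 0 (J (b j)) * fderiv ℝ G 0 (b j) := by
        simp [L, Finset.mul_sum, mul_assoc]
      _ = _ := by
        congr 1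
        field_simp
        simp
  rw [value] at hderiv
  refine hderiv.tendsto_slope_zero_right.congr' ?_
  filter_upwards [self_mem_nhdsWithin] with θ hθ
  rw [twistedPairing_eq_integral_fourier J hθ F.integrable G.integrable,
    ← integral_fourier_eq_apply_zero G]
  simp only [zero_add, zero_smul, smul_eq_mul, integral_const_mul, SchwartzMap.fourier_coe]

end TwistedPairing

section PhaseSpace

/-- The coordinates `(x, w)` on phase space, with domain carrying the Euclidean norm that the
Fourier transform requires; `(ι → ℝ) × (ι → ℝ)` itself has the sup norm. -/
noncomputable def phaseSpaceEquiv (ι : Type*) :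
    EuclideanSpace ℝ (ι ⊕ ι) ≃L[ℝ] (ι → ℝ) × (ι → ℝ) :=
  (EuclideanSpace.equiv (ι ⊕ ι) ℝ).trans
    (ContinuousLinearEquiv.sumPiEquivProdPi ℝ ι ι fun _ => ℝ)

/-- The complex structure `J (x, w) = (w, -x)`, for which `⟪u, J v⟫` is the standard symplectic
form. -/
noncomputable def complexStructure (ι : Type*) [Fintype ι] :
    EuclideanSpace ℝ (ι ⊕ ι) ≃ₗᵢ[ℝ] EuclideanSpace ℝ (ι ⊕ ι) where
  toFun v := WithLp.toLp 2 (Sum.elim (fun i => v (.inr i)) fun i => -v (.inl i))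
  invFun v := WithLp.toLp 2 (Sum.elim (fun i => -v (.inr i)) fun i => v (.inl i))
  map_add' v w := by ext (i | i) <;> simp [add_comm]
  map_smul' c v := by ext (i | i) <;> simp
  left_inv v := by ext (i | i) <;> simp
  right_inv v := by ext (i | i) <;> simp
  norm_map' v := by simp [EuclideanSpace.norm_eq, add_comm]

variable {ι : Type*}

@[simp] lemma phaseSpaceEquiv_fst (v : EuclideanSpace ℝ (ι ⊕ ι)) (i : ι) :
    (phaseSpaceEquiv ι v).1 i = v (.inl i) := rfl

@[simp] lemma phaseSpaceEquiv_snd (v : EuclideanSpace ℝ (ι ⊕ ι)) (i : ι) :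
    (phaseSpaceEquiv ι v).2 i = v (.inr i) := rfl

variable [Fintype ι]

@[simp] lemma complexStructure_inl (v : EuclideanSpace ℝ (ι ⊕ ι)) (i : ι) :
    complexStructure ι v (.inl i) = v (.inr i) := rfl

@[simp] lemma complexStructure_inr (v : EuclideanSpace ℝ (ι ⊕ ι)) (i : ι) :
    complexStructure ι v (.inr i) = -v (.inl i) := rfl

lemma inner_complexStructure (u v : EuclideanSpace ℝ (ι ⊕ ι)) :
    ⟪u, complexStructure ι v⟫ = ∑ i, (u (.inl i) * v (.inr i) - u (.inr i) * v (.inl i)) := by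
  simp [PiLp.inner_apply, mul_comm, sub_eq_add_neg, Finset.sum_add_distrib]

lemma measurePreserving_phaseSpaceEquiv_add (z : (ι → ℝ) × (ι → ℝ)) :
    MeasurePreserving fun v => phaseSpaceEquiv ι v + z := by
  have linear : MeasurePreserving (phaseSpaceEquiv ι) :=
    (volume_measurePreserving_sumPiEquivProdPi fun _ : ι ⊕ ι => ℝ).comp
      (PiLp.volume_preserving_ofLp (ι ⊕ ι))
  simpa [Function.comp_def] using
    linear.comp (measurePreserving_add_right volume ((phaseSpaceEquiv ι).symm z))

/-- `F` in the Euclidean coordinates centred at `z`. -/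
noncomputable def phaseSpacePullback (z : (ι → ℝ) × (ι → ℝ)) (F : 𝓢((ι → ℝ) × (ι → ℝ), ℂ)) :
    𝓢(EuclideanSpace ℝ (ι ⊕ ι), ℂ) :=
  SchwartzMap.compCLMOfContinuousLinearEquiv ℂ (phaseSpaceEquiv ι) (F.compSubConstCLM ℂ (-z))

lemma phaseSpacePullback_apply (z : (ι → ℝ) × (ι → ℝ)) (F : 𝓢((ι → ℝ) × (ι → ℝ), ℂ))
    (v : EuclideanSpace ℝ (ι ⊕ ι)) :
    phaseSpacePullback z F v = F (phaseSpaceEquiv ι v + z) := by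
  simp [phaseSpacePullback]

lemma fderiv_phaseSpacePullback_zero (z : (ι → ℝ) × (ι → ℝ)) (F : 𝓢((ι → ℝ) × (ι → ℝ), ℂ))
    (m : EuclideanSpace ℝ (ι ⊕ ι)) :
    fderiv ℝ (phaseSpacePullback z F) 0 m = fderiv ℝ F z (phaseSpaceEquiv ι m) := by
  have pullback : ⇑(phaseSpacePullback z F) = (fun y => F (y + z)) ∘ phaseSpaceEquiv ι :=
    funext (phaseSpacePullback_apply z F)
  rw [pullback, (phaseSpaceEquiv ι).comp_right_fderiv, fderiv_comp_add_right]
  simp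

end PhaseSpace

lemma sprod_eq_twistedPairing (d : ℕ) (θ : ℝ) (f g : (Fin d → ℝ) × (Fin d → ℝ) → ℂ)
    (z : (Fin d → ℝ) × (Fin d → ℝ)) :
    sprod d θ f g z = twistedPairing (complexStructure (Fin d)) θ
      (fun u => f (phaseSpaceEquiv (Fin d) u + z)) fun v => g (phaseSpaceEquiv (Fin d) v + z) := by
  have chart := measurePreserving_phaseSpaceEquiv_add z
  have chart_embedding : MeasurableEmbedding fun v => phaseSpaceEquiv (Fin d) v + z :=
    ((phaseSpaceEquiv (Fin d)).toHomeomorph.trans (Homeomorph.addRight z)).measurableEmbedding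
  rw [sprod, twistedPairing, Complex.real_smul, Measure.volume_eq_prod,
    ← (chart.prod chart).integral_comp (chart_embedding.prodMap chart_embedding)]
  congr 2
  · rw [zpow_neg, finrank_euclideanSpace, Fintype.card_sum, Fintype.card_fin, ← two_mul]
    norm_cast
  · ext p
    simp only [Prod.map, inner_complexStructure, ← Finset.sum_add_distrib, ← Finset.sum_neg_distrib]
    congr! 5
    simp only [Prod.fst_add, Prod.snd_add, Pi.add_apply, phaseSpaceEquiv_fst, phaseSpaceEquiv_snd]
    ring

lemma sum_fderiv_phaseSpacePullback_eq_poisson (d : ℕ)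
    (f g : 𝓢((Fin d → ℝ) × (Fin d → ℝ), ℂ)) (z : (Fin d → ℝ) × (Fin d → ℝ)) :
    ∑ j, fderiv ℝ (phaseSpacePullback z f) 0
        (complexStructure (Fin d) (EuclideanSpace.basisFun (Fin d ⊕ Fin d) ℝ j)) *
      fderiv ℝ (phaseSpacePullback z g) 0 (EuclideanSpace.basisFun (Fin d ⊕ Fin d) ℝ j) =
    poisson d f g z := by
  have basis_inl (i : Fin d) :
      phaseSpaceEquiv (Fin d) (EuclideanSpace.single (.inl i) 1) = (Pi.single i 1, 0) := by
    ext k <;> simp [Pi.single_apply]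
  have basis_inr (i : Fin d) :
      phaseSpaceEquiv (Fin d) (EuclideanSpace.single (.inr i) 1) = (0, Pi.single i 1) := by
    ext k <;> simp [Pi.single_apply]
  have complexStructure_basis_inl (i : Fin d) :
      complexStructure (Fin d) (EuclideanSpace.single (.inl i) 1) =
        -EuclideanSpace.single (.inr i) 1 := by
    ext (k | k) <;> simp
  have complexStructure_basis_inr (i : Fin d) :
      complexStructure (Fin d) (EuclideanSpace.single (.inr i) 1) =
        EuclideanSpace.single (.inl i) 1 := by
    ext (k | k) <;> simp
  simp only [fderiv_phaseSpacePullback_zero, EuclideanSpace.basisFun_apply, Fintype.sum_sum_type,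
    complexStructure_basis_inl, complexStructure_basis_inr, basis_inl, basis_inr, map_neg, poisson,
    ← Finset.sum_add_distrib]
  exact Finset.sum_congr rfl fun i _ => by ring

lemma poisson_swap (d : ℕ) (f g : (Fin d → ℝ) × (Fin d → ℝ) → ℂ)
    (z : (Fin d → ℝ) × (Fin d → ℝ)) : poisson d g f z = -poisson d f g z := by
  simp only [poisson, ← Finset.sum_neg_distrib, neg_sub, mul_comm]

lemma tendsto_inv_smul_sprod_sub_mul (d : ℕ) (f g : 𝓢((Fin d → ℝ) × (Fin d → ℝ), ℂ))
    (z : (Fin d → ℝ) × (Fin d → ℝ)) :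
    Tendsto (fun θ : ℝ => θ⁻¹ • (sprod d θ f g z - f z * g z)) (𝓝[>] 0)
      (𝓝 (-(I / 2) * poisson d f g z)) := by
  have h := tendsto_inv_smul_twistedPairing_sub (EuclideanSpace.basisFun (Fin d ⊕ Fin d) ℝ)
    (complexStructure (Fin d)) (phaseSpacePullback z f) (phaseSpacePullback z g)
  rw [sum_fderiv_phaseSpacePullback_eq_poisson] at h
  simpa only [sprod_eq_twistedPairing, funext (phaseSpacePullback_apply z _), map_zero,
    zero_add] using h

theorem star_deforms_poisson (d : ℕ)
    (f g : SchwartzMap ((Fin d → ℝ) × (Fin d → ℝ)) ℂ)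
    (z : (Fin d → ℝ) × (Fin d → ℝ)) :
    Tendsto (fun θ : ℝ => (1 / (θ : ℂ)) * (sprod d θ f g z - sprod d θ g f z))
      (nhdsWithin 0 (Set.Ioi 0))
      (nhds (-Complex.I * poisson d f g z)) := by
  have h := (tendsto_inv_smul_sprod_sub_mul d f g z).sub (tendsto_inv_smul_sprod_sub_mul d g f z)
  rw [poisson_swap d f g] at h
  convert h using 2
  · rw [← smul_sub, Complex.real_smul]
    push_cast
    ring
  · ring
end
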